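/- For all integers k and t with 3 ≤ t ≤ k, there exists a constant c = c(k) such that r_k(k+1, t; P_n) < twr_{t−2}(c·n^{2k}) for all n > k: every red/blue coloring of the k-element subsets of {1,...,N} with N ≥ twr_{t−2}(⌈c·n^{2k}⌉) contains a blue ordered copy of the k-uniform tight path on n vertices or a set of k+1 vertices spanning at least t red k-element subsets. -/

import Mathlib

/-!
The proof works with a strengthened target, `InitialOrPath`: instead of an arbitrary `(k+1)`-set
with at least `t` red `k`-subsets, look for one whose `k` smallest vertices also form a red set
(the notion behind `initialSpreadPathRamsey`), inside an arbitrary finite vertex set.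

*Three red edges, quadratic bound.* A blue broom is a blue tight path `v` on `a` vertices together
with `m` later vertices `w`, each of which prolongs the path in blue.  Let `T` be the set of the
last `k-2` path vertices and let `w₀` be the least of the `m+1` prolongations of a broom.  If all
`T ∪ {w₀, w'}` are blue, then `w₀` joins the path and `m` prolongations remain.  Otherwise
`T ∪ {w₀, w'}` is red for some `w'`, and every `x` beyond `w'` makes one of
`T ∪ {w₀, x}`, `T ∪ {w', x}` blue, since otherwise `T ∪ {w₀, w', x}` spans three red sets including
its initial one.  So among `2m` reserved vertices on the far right, at least `m` prolong the path
ended with `w₀` or the path ended with `w'`.  Each step costs only `2m` vertices plus one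
prolongation, so a path on `n` vertices needs at most `3n²` vertices (`exists_broom`,
`initialOrPath_three`).

*Step-up.* An Erdős–Rado argument (`exists_prefix_determined`) passes to a set `Y` and a later
vertex `s` such that the color of every `(k+1)`-subset of `Y` equals that of its `k` smallest
vertices joined with `s`.  Color the `k`-subsets of `Y` by joining them with `s`.  A blue path for
this coloring is a blue path for the original one, and a `(k+1)`-set `S` with `t` red edges, one of
them initial, gives `S ∪ {s}`, with `t+1` red edges, one of them the initial edge `S`
(`InitialOrPath.step`).  Each step costs one exponential; `exists_initialOrPath` tracks the bounds.
-/

/-!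
Colorings are maps from finite sets of naturals to `Bool`,
with `true` = red and `false` = blue.  All structures live inside
the vertex set `{1, ..., N}`, i.e. `Finset.Icc 1 N`.
-/

/-- A blue ordered copy of the `k`-uniform tight path on `n` vertices inside `{1,...,N}`:
a strictly increasing sequence `x 0 < x 1 < ⋯ < x (n-1)` of elements of `{1,...,N}`
all of whose consecutive `k`-element windows are blue. -/
def HasBlueTightPath (k n N : ℕ) (χ : Finset ℕ → Bool) : Prop :=
  ∃ x : ℕ → ℕ, StrictMono x ∧ (∀ i < n, x i ∈ Finset.Icc 1 N) ∧
    ∀ j, j + k ≤ n → χ ((Finset.range k).image fun i => x (j + i)) = false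

/-- A red copy of the complete `k`-uniform hypergraph on `s` vertices inside `{1,...,N}`:
a set of `s` vertices all of whose `k`-element subsets are red. -/
def HasRedClique (k s N : ℕ) (χ : Finset ℕ → Bool) : Prop :=
  ∃ S : Finset ℕ, S ⊆ Finset.Icc 1 N ∧ S.card = s ∧
    ∀ e ⊆ S, e.card = k → χ e = true

/-- The Ramsey number `r_k(s, P_n)`. -/
noncomputable def cliquePathRamsey (k s n : ℕ) : ℕ :=
  sInf {N | ∀ χ : Finset ℕ → Bool, HasRedClique k s N χ ∨ HasBlueTightPath k n N χ}

/-- An ordered copy of the path power `P_m^ℓ` in color `c` inside `{1,...,N}`: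
a strictly increasing sequence `x 0 < ⋯ < x (m-1)` in `{1,...,N}` with
`χ {x i, x j} = c` whenever `i < j < m` and `j - i ≤ ℓ`. -/
def HasPowPath (ℓ m N : ℕ) (c : Bool) (χ : Finset ℕ → Bool) : Prop :=
  ∃ x : ℕ → ℕ, StrictMono x ∧ (∀ i < m, x i ∈ Finset.Icc 1 N) ∧
    ∀ i j, i < j → j < m → j - i ≤ ℓ → χ {x i, x j} = c

/-- The ordered Ramsey number `r(P_a^ℓ, P_b^ℓ)`. -/
noncomputable def powPathRamsey (ℓ a b : ℕ) : ℕ :=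
  sInf {N | ∀ χ : Finset ℕ → Bool, HasPowPath ℓ a N true χ ∨ HasPowPath ℓ b N false χ}

/-- A set of `s` vertices inside `{1,...,N}` spanning at least `t` red `k`-element subsets. -/
def HasRedSpread (k s t N : ℕ) (χ : Finset ℕ → Bool) : Prop :=
  ∃ S : Finset ℕ, S ⊆ Finset.Icc 1 N ∧ S.card = s ∧
    t ≤ ((Finset.powersetCard k S).filter fun e => χ e = true).card

/-- The Ramsey number `r_k(s, t; P_n)`. -/
noncomputable def spreadPathRamsey (k s t n : ℕ) : ℕ :=
  sInf {N | ∀ χ : Finset ℕ → Bool, HasRedSpread k s t N χ ∨ HasBlueTightPath k n N χ}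

/-- A set `S` of `k+1` vertices inside `{1,...,N}` spanning at least `t` red `k`-element
subsets, one of which consists of the `k` smallest vertices of `S` (i.e. `S` minus its
maximum element `v`). -/
def HasRedInitialSpread (k t N : ℕ) (χ : Finset ℕ → Bool) : Prop :=
  ∃ S : Finset ℕ, S ⊆ Finset.Icc 1 N ∧ S.card = k + 1 ∧
    (∃ v ∈ S, (∀ u ∈ S, u ≤ v) ∧ χ (S.erase v) = true) ∧
    t ≤ ((Finset.powersetCard k S).filter fun e => χ e = true).card

/-- The Ramsey number `f_k(k+1, t; P_n)`: the minimum `N` such that every coloring of the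
`k`-sets of `{1,...,N}` has a blue tight path on `n` vertices or a set of `k+1` vertices
spanning at least `t` red `k`-sets, one of which consists of its `k` smallest vertices. -/
noncomputable def initialSpreadPathRamsey (k t n : ℕ) : ℕ :=
  sInf {N | ∀ χ : Finset ℕ → Bool, HasRedInitialSpread k t N χ ∨ HasBlueTightPath k n N χ}

/-- A blue ordered copy of the `k`-uniform broom `B_{a,m}` inside `{1,...,N}`:
vertices `v 0 < ⋯ < v (a-1) < w 0 < ⋯ < w (m-1)`, every consecutive `k`-window of the
`v`'s is blue, and (provided `a ≥ k-1`) for each `j` the `k`-set consisting of the last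
`k-1` of the `v`'s together with `w j` is blue. -/
def HasBlueBroom (k a m N : ℕ) (χ : Finset ℕ → Bool) : Prop :=
  ∃ v w : ℕ → ℕ, StrictMono v ∧ StrictMono w ∧
    (∀ i < a, v i ∈ Finset.Icc 1 N) ∧ (∀ j < m, w j ∈ Finset.Icc 1 N) ∧
    (∀ i < a, ∀ j < m, v i < w j) ∧
    (∀ j, j + k ≤ a → χ ((Finset.range k).image fun i => v (j + i)) = false) ∧
    (k - 1 ≤ a → ∀ j < m,
      χ (insert (w j) ((Finset.range (k - 1)).image fun i => v (a - (k - 1) + i))) = false)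

/-- The Ramsey number `r_3(4, 3; B_{a,m})` for the `3`-uniform broom. -/
noncomputable def spreadBroomRamsey3 (a m : ℕ) : ℕ :=
  sInf {N | ∀ χ : Finset ℕ → Bool, HasRedSpread 3 4 3 N χ ∨ HasBlueBroom 3 a m N χ}

/-- The tower function: `twr 1 x = x` and `twr (i+1) x = 2 ^ twr i x`. -/
def twr (i x : ℕ) : ℕ := (fun y => 2 ^ y)^[i - 1] x

/-- The real tower function: `rtwr 1 x = x` and `rtwr (i+1) x = 2 ^ rtwr i x`. -/
noncomputable def rtwr (i : ℕ) (x : ℝ) : ℝ := (fun y => (2 : ℝ) ^ y)^[i - 1] x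

/-! ### The strengthened Ramsey property -/

/-- `S ⊆ V` is a set of `k+1` vertices whose `k` smallest vertices form a red set and which spans
at least `t` red `k`-sets.  A `k`-subset of `S` is encoded by the vertex of `S` it omits. -/
def InitialSpreadIn (k t : ℕ) (V : Finset ℕ) (χ : Finset ℕ → Bool) : Prop :=
  ∃ S ⊆ V, S.card = k + 1 ∧ (∃ v ∈ S, (∀ u ∈ S, u ≤ v) ∧ χ (S.erase v) = true) ∧
    t ≤ (S.filter fun v => χ (S.erase v) = true).card

/-- The values of `x` at the indices below `n` form a blue tight path inside `V`. -/
def IsBluePath (k n : ℕ) (V : Finset ℕ) (χ : Finset ℕ → Bool) (x : ℕ → ℕ) : Prop :=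
  (∀ i j, i < j → j < n → x i < x j) ∧ (∀ i < n, x i ∈ V) ∧
    ∀ j, j + k ≤ n → χ ((Finset.range k).image fun i => x (j + i)) = false

/-- Every coloring of a set of at least `M` vertices contains an initial red spread or a blue
tight path on `n` vertices. -/
def InitialOrPath (k t n M : ℕ) : Prop :=
  ∀ V : Finset ℕ, M ≤ V.card → ∀ χ : Finset ℕ → Bool,
    InitialSpreadIn k t V χ ∨ ∃ x, IsBluePath k n V χ x

theorem InitialSpreadIn.hasRedSpread {k t N : ℕ} {χ : Finset ℕ → Bool}
    (h : InitialSpreadIn k t (Finset.Icc 1 N) χ) : HasRedSpread k (k + 1) t N χ := by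
  obtain ⟨S, hS, hc, -, ht⟩ := h
  refine ⟨S, hS, hc, ht.trans ?_⟩
  apply Finset.card_le_card_of_injOn (fun v => S.erase v)
  · intro v hv
    simp only [Finset.coe_filter, Set.mem_ofPred_eq, Finset.mem_powersetCard] at hv ⊢
    refine ⟨⟨Finset.erase_subset _ _, ?_⟩, hv.2⟩
    rw [Finset.card_erase_of_mem hv.1, hc]; rfl
  · intro a ha b hb hab
    simp only [Finset.coe_filter, Set.mem_ofPred_eq] at ha hb
    exact Finset.erase_injOn S ha.1 hb.1 hab

theorem IsBluePath.hasBlueTightPath {k n N : ℕ} {χ : Finset ℕ → Bool} {x : ℕ → ℕ}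
    (h : IsBluePath k n (Finset.Icc 1 N) χ x) : HasBlueTightPath k n N χ := by
  obtain ⟨hm, hV, hb⟩ := h
  -- The sequence must be strictly increasing on all of `ℕ`: continue it beyond `N`.
  refine ⟨fun i => if i < n then x i else N + 1 + i, ?_, ?_, ?_⟩
  · intro i j hij
    simp only
    split_ifs with h1 h2 h2
    · exact hm i j hij h2
    · have := Finset.mem_Icc.1 (hV i h1); omega
    · omega
    · omega
  · intro i hi
    simpa [hi] using hV i hi
  · intro j hj
    rw [← hb j hj]
    congr 1
    apply Finset.image_congr
    intro i hi
    have : j + i < n := by have := Finset.mem_range.1 (Finset.mem_coe.1 hi); omega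
    simp [this]

/-! ### Brooms: the case of three red edges -/

theorem exists_split (p : ℕ) : ∀ (r : ℕ) (V : Finset ℕ), p + r ≤ V.card →
    ∃ A ⊆ V, ∃ R ⊆ V, p ≤ A.card ∧ r ≤ R.card ∧ ∀ a ∈ A, ∀ b ∈ R, a < b := by
  intro r
  induction r with
  | zero => intro V h; exact ⟨V, subset_rfl, ∅, by simp, by simpa using h, by simp, by simp⟩
  | succ r ih =>
    intro V h
    have hne : V.Nonempty := Finset.card_pos.1 (by omega)
    have hmem := V.max'_mem hne
    obtain ⟨A, hA, R, hR, hpA, hrR, hAR⟩ := ih (V.erase (V.max' hne))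
      (by rw [Finset.card_erase_of_mem hmem]; omega)
    refine ⟨A, hA.trans (Finset.erase_subset _ _), insert (V.max' hne) R, ?_, hpA, ?_, ?_⟩
    · exact Finset.insert_subset hmem (hR.trans (Finset.erase_subset _ _))
    · rw [Finset.card_insert_of_notMem]
      · omega
      · intro hx; simpa using hR hx
    · intro a ha b hb
      rcases Finset.mem_insert.1 hb with rfl | hb
      · exact Finset.lt_max'_of_mem_erase_max' _ _ (hA ha)
      · exact hAR a ha b hb

/-- A blue broom of uniformity `q + 2` in `V`: a blue path `v` on `a` vertices and a set `W` of
later vertices, each forming a blue set with the last `q + 1` vertices of the path (no condition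
if the path has fewer vertices). -/
def IsBroom (q a : ℕ) (V : Finset ℕ) (χ : Finset ℕ → Bool) (v : ℕ → ℕ) (W : Finset ℕ) : Prop :=
  IsBluePath (q + 2) a V χ v ∧ W ⊆ V ∧ (∀ i < a, ∀ w ∈ W, v i < w) ∧
    ∀ j, j + (q + 1) = a → ∀ w ∈ W,
      χ (insert w ((Finset.range (q + 1)).image fun i => v (j + i))) = false

theorem image_window_update (v : ℕ → ℕ) (a y j r : ℕ) (h : j + r = a) :
    ((Finset.range (r + 1)).image fun i => Function.update v a y (j + i)) =
      insert y ((Finset.range r).image fun i => v (j + i)) := by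
  rw [Finset.range_add_one, Finset.image_insert, h, Function.update_self]
  congr 1
  apply Finset.image_congr
  intro i hi
  have := Finset.mem_range.1 (Finset.mem_coe.1 hi)
  simp only
  rw [Function.update_of_ne (by omega)]

/-- Moving a prolongation `y` of a broom onto the path, given a set `W'` of prolongations of the
new path. -/
theorem IsBroom.extend {q a : ℕ} {V V' : Finset ℕ} {χ : Finset ℕ → Bool} {v : ℕ → ℕ}
    {W W' : Finset ℕ} (h : IsBroom q a V χ v W) (hVV : V ⊆ V') {y : ℕ} (hy : y ∈ W)
    (hW' : W' ⊆ V') (hlt : ∀ w ∈ W', y < w)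
    (hblue : ∀ j, j + q = a → ∀ w ∈ W',
      χ (insert w (insert y ((Finset.range q).image fun i => v (j + i)))) = false) :
    IsBroom q (a + 1) V' χ (Function.update v a y) W' := by
  obtain ⟨⟨hm, hV, hb⟩, hWV, hvW, hbW⟩ := h
  have hne : ∀ i < a, Function.update v a y i = v i := fun i hi =>
    Function.update_of_ne (by omega) _ _
  refine ⟨⟨?_, ?_, ?_⟩, hW', ?_, ?_⟩
  · intro i j hij hj
    rw [hne i (by omega)]
    rcases Nat.lt_succ_iff_lt_or_eq.1 hj with hj | rfl
    · rw [hne j hj]; exact hm i j hij hj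
    · rw [Function.update_self]; exact hvW i hij y hy
  · intro i hi
    rcases Nat.lt_succ_iff_lt_or_eq.1 hi with hi | rfl
    · rw [hne i hi]; exact hVV (hV i hi)
    · rw [Function.update_self]; exact hVV (hWV hy)
  · intro j hj
    rcases Nat.lt_or_ge (j + (q + 1)) a with hlt' | hge
    · rw [← hb j (by omega)]
      congr 1
      apply Finset.image_congr
      intro i hi
      have := Finset.mem_range.1 (Finset.mem_coe.1 hi)
      exact hne _ (by omega)
    · rw [image_window_update v a y j (q + 1) (by omega)]
      exact hbW j (by omega) y hy
  · intro i hi w hw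
    rcases Nat.lt_succ_iff_lt_or_eq.1 hi with hi | rfl
    · rw [hne i hi]; exact (hvW i hi y hy).trans (hlt w hw)
    · rw [Function.update_self]; exact hlt w hw
  · intro j hj w hw
    rw [image_window_update v a y j q (by omega)]
    exact hblue j (by omega) w hw

/-- A set `T` followed by `w < w' < x` such that the three sets omitting `x`, `w'` or `w` are red
is an initial red spread. -/
theorem initialSpreadIn_of_three {q : ℕ} {V : Finset ℕ} {χ : Finset ℕ → Bool} {T : Finset ℕ}
    {w w' x : ℕ} (hT : T.card = q) (hTV : T ⊆ V) (hTw : ∀ u ∈ T, u < w) (hww : w < w')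
    (hwx : w' < x) (hw : w ∈ V) (hw' : w' ∈ V) (hx : x ∈ V)
    (h1 : χ (insert w' (insert w T)) = true) (h2 : χ (insert x (insert w T)) = true)
    (h3 : χ (insert x (insert w' T)) = true) : InitialSpreadIn (q + 2) 3 V χ := by
  have hwT : w ∉ T := fun h => (hTw _ h).false
  have hw'T : w' ∉ T := fun h => absurd (hTw _ h) (by omega)
  have hxT : x ∉ T := fun h => absurd (hTw _ h) (by omega)
  have e1 : (insert x (insert w' (insert w T))).erase x = insert w' (insert w T) := by
    rw [Finset.erase_insert]
    simp only [Finset.mem_insert, not_or]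
    exact ⟨by omega, by omega, hxT⟩
  have e2 : (insert x (insert w' (insert w T))).erase w' = insert x (insert w T) := by
    rw [Finset.insert_comm, Finset.erase_insert]
    simp only [Finset.mem_insert, not_or]
    exact ⟨by omega, by omega, hw'T⟩
  have e3 : (insert x (insert w' (insert w T))).erase w = insert x (insert w' T) := by
    rw [Finset.insert_comm w' w, Finset.insert_comm x w, Finset.erase_insert]
    simp only [Finset.mem_insert, not_or]
    exact ⟨by omega, by omega, hwT⟩
  refine ⟨insert x (insert w' (insert w T)), ?_, ?_, ⟨x, by simp, ?_, by rw [e1]; exact h1⟩, ?_⟩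
  · intro u hu
    simp only [Finset.mem_insert] at hu
    rcases hu with rfl | rfl | rfl | hu
    exacts [hx, hw', hw, hTV hu]
  · rw [Finset.card_insert_of_notMem, Finset.card_insert_of_notMem,
      Finset.card_insert_of_notMem hwT, hT]
    · simp only [Finset.mem_insert, not_or]; exact ⟨by omega, hw'T⟩
    · simp only [Finset.mem_insert, not_or]; exact ⟨by omega, by omega, hxT⟩
  · intro u hu
    simp only [Finset.mem_insert] at hu
    rcases hu with rfl | rfl | rfl | hu
    · omega
    · omega
    · omega
    · have := hTw u hu; omega
  · have hcard : ({x, w', w} : Finset ℕ).card = 3 :=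
      Finset.card_eq_three.2 ⟨x, w', w, by omega, by omega, by omega, rfl⟩
    rw [← hcard]
    apply Finset.card_le_card
    intro u hu
    simp only [Finset.mem_insert, Finset.mem_singleton] at hu
    rw [Finset.mem_filter]
    rcases hu with rfl | rfl | rfl
    · exact ⟨by simp, by rw [e1]; exact h1⟩
    · exact ⟨by simp, by rw [e2]; exact h2⟩
    · exact ⟨by simp, by rw [e3]; exact h3⟩

/-- Without an initial red spread, `m + a + 2a(m + a)` vertices contain a blue broom with `a` path
vertices and `m` prolongations.  The induction adds one path vertex, loses one prolongation, and
uses `2m` reserved vertices. -/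
theorem exists_broom (q : ℕ) (χ : Finset ℕ → Bool) : ∀ (a m : ℕ) (V : Finset ℕ),
    m + a + 2 * a * (m + a) ≤ V.card → ¬ InitialSpreadIn (q + 2) 3 V χ →
    ∃ v W, IsBroom q a V χ v W ∧ m ≤ W.card := by
  intro a
  induction a with
  | zero =>
    intro m V hV _
    refine ⟨id, V, ⟨⟨by simp, by simp, fun j hj => by omega⟩, subset_rfl, by simp,
      fun j hj => by omega⟩, by simpa using hV⟩
  | succ a ih =>
    intro m V hV hno
    obtain ⟨A, hA, R, hR, hcA, hcR, hAR⟩ := exists_split (m + 1 + a + 2 * a * (m + 1 + a)) (2 * m) V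
      (le_trans (by nlinarith) hV)
    have hnoA : ¬ InitialSpreadIn (q + 2) 3 A χ := by
      rintro ⟨S, hS, h⟩
      exact hno ⟨S, hS.trans hA, h⟩
    obtain ⟨v, W, hB, hcW⟩ := ih (m + 1) A hcA hnoA
    have hWA : W ⊆ A := hB.2.1
    have hne : W.Nonempty := Finset.card_pos.1 (by omega)
    set w := W.min' hne with hw
    have hwW : w ∈ W := W.min'_mem hne
    by_cases hall : ∀ j, j + q = a → ∀ w' ∈ W.erase w,
        χ (insert w' (insert w ((Finset.range q).image fun i => v (j + i)))) = false
    · refine ⟨_, W.erase w, hB.extend hA hwW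
        (((Finset.erase_subset _ _).trans hWA).trans hA) ?_ hall, ?_⟩
      · intro u hu; exact Finset.min'_lt_of_mem_erase_min' _ _ hu
      · rw [Finset.card_erase_of_mem hwW]; omega
    · push Not at hall
      obtain ⟨j, hj, w', hw', hred⟩ := hall
      have hred : χ (insert w' (insert w ((Finset.range q).image fun i => v (j + i)))) = true := by
        simpa using hred
      have hww : w < w' := Finset.min'_lt_of_mem_erase_min' _ _ hw'
      have hw'W : w' ∈ W := Finset.mem_of_mem_erase hw'
      set T := (Finset.range q).image fun i => v (j + i) with hT
      have hTw : ∀ u ∈ T, u < w := by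
        intro u hu
        obtain ⟨i, hi, rfl⟩ := Finset.mem_image.1 hu
        exact hB.2.2.1 _ (by have := Finset.mem_range.1 hi; omega) w hwW
      have hTV : T ⊆ V := by
        intro u hu
        obtain ⟨i, hi, rfl⟩ := Finset.mem_image.1 hu
        exact hA (hB.1.2.1 _ (by have := Finset.mem_range.1 hi; omega))
      have hTc : T.card = q := by
        rw [hT, Finset.card_image_of_injOn, Finset.card_range]
        intro i hi i' hi' hii
        have h1 := Finset.mem_range.1 (Finset.mem_coe.1 hi)
        have h2 := Finset.mem_range.1 (Finset.mem_coe.1 hi')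
        simp only at hii
        rcases Nat.lt_trichotomy i i' with h | h | h
        · have := hB.1.1 (j + i) (j + i') (by omega) (by omega); omega
        · exact h
        · have := hB.1.1 (j + i') (j + i) (by omega) (by omega); omega
      have hcover : R ⊆ R.filter (fun x => χ (insert x (insert w T)) = false) ∪
          R.filter (fun x => χ (insert x (insert w' T)) = false) := by
        intro x hx
        by_contra hcon
        simp only [Finset.mem_union, Finset.mem_filter, hx, true_and, not_or,
          Bool.not_eq_false] at hcon
        exact hno (initialSpreadIn_of_three hTc hTV hTw hww (hAR w' (hWA hw'W) x hx)
          (hA (hWA hwW)) (hA (hWA hw'W)) (hR hx) hred hcon.1 hcon.2)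
      have hsum := (Finset.card_le_card hcover).trans (Finset.card_union_le _ _)
      have key : ∀ y ∈ W, m ≤ (R.filter (fun x => χ (insert x (insert y T)) = false)).card →
          ∃ v W, IsBroom q (a + 1) V χ v W ∧ m ≤ W.card := by
        intro y hy hm
        refine ⟨_, _, hB.extend hA hy ((Finset.filter_subset _ R).trans hR) ?_ ?_, hm⟩
        · intro x hx
          exact hAR y (hWA hy) x (Finset.mem_of_mem_filter x hx)
        · intro j' hj' x hx
          obtain rfl : j' = j := by omega
          exact (Finset.mem_filter.1 hx).2
      rcases Nat.lt_or_ge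
        (R.filter (fun x => χ (insert x (insert w T)) = false)).card m with h | h
      · exact key w' hw'W (by omega)
      · exact key w hwW h

theorem initialOrPath_three (q n : ℕ) : InitialOrPath (q + 2) 3 n (3 * n ^ 2) := by
  intro V hV χ
  by_cases h : InitialSpreadIn (q + 2) 3 V χ
  · exact Or.inl h
  · obtain ⟨v, W, hB, -⟩ := exists_broom q χ n 0 V (le_trans (by nlinarith) hV) h
    exact Or.inr ⟨v, hB.1⟩

/-! ### Step-up -/

/-- Erdős–Rado: choose the vertices of `Y` one by one, `S` being the set of later vertices still
available, so that the color of a `(p+2)`-set whose `p+1` smallest vertices lie in `Y` does not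
change when its largest vertex is replaced by an element of `S`.  For `i = M`, a set `Y` of `M`
vertices is reached with `S` still nonempty. -/
theorem exists_prefix_determined (p M : ℕ) (V : Finset ℕ) (χ : Finset ℕ → Bool)
    (hV : 2 ^ (M * (M ^ p + 1)) ≤ V.card) : ∀ i ≤ M, ∃ Y ⊆ V, ∃ S ⊆ V, Y.card = i ∧
      2 ^ ((M - i) * (M ^ p + 1)) ≤ S.card ∧ (∀ y ∈ Y, ∀ s ∈ S, y < s) ∧
      ∀ e ⊆ Y, e.card = p + 1 → ∀ x ∈ Y ∪ S, (∀ u ∈ e, u < x) → ∀ s ∈ S,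
        χ (insert x e) = χ (insert s e) := by
  intro i
  induction i with
  | zero =>
    intro _
    refine ⟨∅, by simp, V, subset_rfl, rfl, by simpa using hV, by simp, ?_⟩
    intro e he hc
    rw [Finset.subset_empty.1 he] at hc
    simp at hc
  | succ i ih =>
    intro hi
    obtain ⟨Y, hYV, S, hSV, hYc, hSc, hYS, hdet⟩ := ih (by omega)
    have hne : S.Nonempty := Finset.card_pos.1 (lt_of_lt_of_le (by positivity) hSc)
    set y := S.min' hne with hy
    have hyS : y ∈ S := S.min'_mem hne
    have hyY : y ∉ Y := fun h => (hYS y h y hyS).false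
    set r := (M - (i + 1)) * (M ^ p + 1) with hr
    have hexp : (M - i) * (M ^ p + 1) = r + M ^ p + 1 := by
      rw [hr, show M - i = (M - (i + 1)) + 1 by omega]; ring
    -- Sort the remaining vertices by the colors they give to the sets with largest vertex `y`.
    have hpig := Finset.exists_le_card_fiber_of_mul_le_card_of_maps_to
      (s := S.erase y) (t := (Finset.powersetCard p Y).powerset)
      (f := fun x => (Finset.powersetCard p Y).filter
        fun e => χ (insert x (insert y e)) = true) (n := 2 ^ r)
      (fun x _ => by simp) (Finset.powerset_nonempty _) (by
        rw [Finset.card_powerset, Finset.card_powersetCard, Finset.card_erase_of_mem hyS, hYc,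
          ← pow_add]
        have h1 : i.choose p ≤ M ^ p :=
          (Nat.choose_le_pow i p).trans (Nat.pow_le_pow_left (by omega) p)
        have h2 : 2 ^ (i.choose p + r) ≤ 2 ^ (r + M ^ p) :=
          Nat.pow_le_pow_right (by norm_num) (by omega)
        have h3 : 1 ≤ 2 ^ (r + M ^ p) := Nat.one_le_two_pow
        rw [hexp, pow_succ] at hSc
        omega)
    obtain ⟨F, -, hF⟩ := hpig
    set S' := (S.erase y).filter (fun x => (Finset.powersetCard p Y).filter
        (fun e => χ (insert x (insert y e)) = true) = F) with hS'
    have hS'S : S' ⊆ S := (Finset.filter_subset _ _).trans (Finset.erase_subset _ _)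
    refine ⟨insert y Y, Finset.insert_subset (hSV hyS) hYV, S', hS'S.trans hSV, ?_, hF, ?_, ?_⟩
    · rw [Finset.card_insert_of_notMem hyY, hYc]
    · intro u hu s hs
      rcases Finset.mem_insert.1 hu with rfl | hu
      · exact Finset.min'_lt_of_mem_erase_min' _ _ (Finset.mem_of_mem_filter s hs)
      · exact hYS u hu s (hS'S hs)
    · intro e he hec x hx hlt s hs
      by_cases hye : y ∈ e
      · -- Here `x > y`, so that `x` and `s` lie in the same fibre.
        have hxy := hlt y hye
        have hxS' : x ∈ S' := by
          rcases Finset.mem_union.1 hx with hx | hx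
          · rcases Finset.mem_insert.1 hx with rfl | hx
            · omega
            · have := hYS x hx y hyS; omega
          · exact hx
        have heq := (Finset.mem_filter.1 hxS').2.trans (Finset.mem_filter.1 hs).2.symm
        have hmem : e.erase y ∈ Finset.powersetCard p Y := by
          rw [Finset.mem_powersetCard]
          refine ⟨fun u hu => ?_, by rw [Finset.card_erase_of_mem hye, hec]; rfl⟩
          exact (Finset.mem_insert.1 (he (Finset.mem_of_mem_erase hu))).resolve_left
            (Finset.ne_of_mem_erase hu)
        have := Finset.ext_iff.1 heq (e.erase y)
        simp only [Finset.mem_filter, hmem, true_and, Finset.insert_erase hye] at this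
        exact Bool.eq_iff_iff.2 this
      · have heY : e ⊆ Y := (Finset.subset_insert_iff_of_notMem hye).1 he
        refine hdet e heY hec x ?_ hlt s (hS'S hs)
        rcases Finset.mem_union.1 hx with hx | hx
        · rcases Finset.mem_insert.1 hx with rfl | hx
          · exact Finset.mem_union_right _ hyS
          · exact Finset.mem_union_left _ hx
        · exact Finset.mem_union_right _ (hS'S hx)

theorem InitialOrPath.step {p t n M : ℕ} (h : InitialOrPath (p + 1) t n M) :
    InitialOrPath (p + 2) (t + 1) n (2 ^ (M * (M ^ p + 1))) := by
  intro V hV χ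
  obtain ⟨Y, hYV, S₀, hSV, hYc, hSc, hYS, hdet⟩ := exists_prefix_determined p M V χ hV M le_rfl
  obtain ⟨s, hs⟩ : S₀.Nonempty := Finset.card_pos.1 (lt_of_lt_of_le (by positivity) hSc)
  rcases h Y hYc.ge (fun e => χ (insert s e)) with
    ⟨S, hSY, hSc, ⟨v, hvS, hmax, hred⟩, ht⟩ | ⟨x, hm, hxY, hb⟩
  · left
    have hsS : s ∉ S := fun h => (hYS s (hSY h) s hs).false
    have hSred : χ S = true := by
      have := hdet (S.erase v) ((Finset.erase_subset _ _).trans hSY)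
        (by rw [Finset.card_erase_of_mem hvS, hSc]; rfl) v (Finset.mem_union_left _ (hSY hvS))
        (fun u hu => lt_of_le_of_ne (hmax u (Finset.mem_of_mem_erase hu))
          (Finset.ne_of_mem_erase hu)) s hs
      rw [Finset.insert_erase hvS] at this
      rw [this]; exact hred
    refine ⟨insert s S, Finset.insert_subset (hSV hs) (hSY.trans hYV), ?_, ⟨s, by simp, ?_, ?_⟩, ?_⟩
    · rw [Finset.card_insert_of_notMem hsS, hSc]
    · intro u hu
      rcases Finset.mem_insert.1 hu with rfl | hu
      · exact le_rfl
      · exact (hYS u (hSY hu) s hs).le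
    · rw [Finset.erase_insert hsS]; exact hSred
    · have hsub : insert s (S.filter fun v => χ (insert s (S.erase v)) = true) ⊆
          (insert s S).filter fun v => χ ((insert s S).erase v) = true := by
        intro u hu
        rcases Finset.mem_insert.1 hu with rfl | hu
        · rw [Finset.mem_filter, Finset.erase_insert hsS]
          exact ⟨by simp, hSred⟩
        · obtain ⟨hu1, hu2⟩ := Finset.mem_filter.1 hu
          have hus : s ≠ u := fun h => hsS (h ▸ hu1)
          rw [Finset.mem_filter, Finset.erase_insert_of_ne hus]
          exact ⟨Finset.mem_insert_of_mem hu1, hu2⟩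
      refine le_trans ?_ (Finset.card_le_card hsub)
      rw [Finset.card_insert_of_notMem (fun h => hsS (Finset.mem_of_mem_filter s h))]
      exact Nat.succ_le_succ ht
  · right
    refine ⟨x, hm, fun i hi => hYV (hxY i hi), ?_⟩
    intro j hj
    rw [Finset.range_add_one, Finset.image_insert,
      hdet ((Finset.range (p + 1)).image fun i => x (j + i)) ?_ ?_ (x (j + (p + 1)))
        (Finset.mem_union_left _ (hxY _ (by omega))) ?_ s hs]
    · exact hb j (by omega)
    · intro u hu
      obtain ⟨i, hi, rfl⟩ := Finset.mem_image.1 hu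
      exact hxY _ (by have := Finset.mem_range.1 hi; omega)
    · rw [Finset.card_image_of_injOn, Finset.card_range]
      intro i hi i' hi' hii
      have h1 := Finset.mem_range.1 (Finset.mem_coe.1 hi)
      have h2 := Finset.mem_range.1 (Finset.mem_coe.1 hi')
      simp only at hii
      rcases Nat.lt_trichotomy i i' with h | h | h
      · have := hm (j + i) (j + i') (by omega) (by omega); omega
      · exact h
      · have := hm (j + i') (j + i) (by omega) (by omega); omega
    · intro u hu
      obtain ⟨i, hi, rfl⟩ := Finset.mem_image.1 hu
      have := Finset.mem_range.1 hi
      exact hm _ _ (by omega) (by omega)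

/-! ### Tower bounds -/

/-- The quantity `4K·M^K` dominates `M` and grows by at most one exponential per step: it absorbs
the exponent `M^k + M ≤ 2·M^K` of the step-up from uniformity `k < K`, multiplied by `K`. -/
theorem exists_initialOrPath (q n K : ℕ) (hn : 1 ≤ n) : ∀ d, q + 2 + d ≤ K →
    ∃ M, 1 ≤ M ∧ InitialOrPath (q + 2 + d) (3 + d) n M ∧
      4 * K * M ^ K ≤ (fun y => 2 ^ y)^[d] (4 * K * (3 * n ^ 2) ^ K) := by
  intro d
  induction d with
  | zero =>
    intro _
    exact ⟨3 * n ^ 2, by have := Nat.one_le_pow 2 n hn; omega, initialOrPath_three q n, le_rfl⟩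
  | succ d ih =>
    intro hK
    obtain ⟨M, hM, hP, hb⟩ := ih (by omega)
    refine ⟨2 ^ (M * (M ^ (q + 1 + d) + 1)), Nat.one_le_two_pow, ?_, ?_⟩
    · have : InitialOrPath (q + 1 + d + 1) (3 + d) n M := by
        rwa [show q + 1 + d + 1 = q + 2 + d by ring]
      have := this.step
      rwa [show q + 1 + d + 2 = q + 2 + (d + 1) by ring,
        show 3 + d + 1 = 3 + (d + 1) by ring] at this
    · rw [Function.iterate_succ_apply']
      refine le_trans ?_ (Nat.pow_le_pow_right (by norm_num) hb)
      have h1 : M * (M ^ (q + 1 + d) + 1) ≤ 2 * M ^ K := by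
        have e1 : M ^ (q + 1 + d + 1) ≤ M ^ K := Nat.pow_le_pow_right hM (by omega)
        have e2 : M ^ 1 ≤ M ^ K := Nat.pow_le_pow_right hM (by omega)
        rw [pow_one] at e2
        rw [mul_add, mul_one, ← pow_succ']
        omega
      have h2 : 1 ≤ M ^ K := Nat.one_le_pow _ _ hM
      have h3 : 4 * K ≤ 2 ^ (2 * K * M ^ K) := by
        have e2 : 2 * K ≤ 2 ^ (2 * K - 1) := by
          have := Nat.lt_two_pow_self (n := 2 * K - 1)
          omega
        have e3 : 2 ^ (2 * K) = 2 * 2 ^ (2 * K - 1) := by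
          rw [← pow_succ']; congr 1; omega
        have e4 : 2 ^ (2 * K) ≤ 2 ^ (2 * K * M ^ K) :=
          Nat.pow_le_pow_right (by norm_num) (Nat.le_mul_of_pos_right _ h2)
        omega
      calc 4 * K * (2 ^ (M * (M ^ (q + 1 + d) + 1))) ^ K
          ≤ 2 ^ (2 * K * M ^ K) * (2 ^ (2 * M ^ K)) ^ K := by gcongr; norm_num
        _ = 2 ^ (4 * K * M ^ K) := by rw [← pow_mul, ← pow_add]; congr 1; ring

theorem iterate_two_pow_mono (d : ℕ) : Monotone ((fun y : ℕ => 2 ^ y)^[d]) :=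
  Monotone.iterate (fun _ _ h => Nat.pow_le_pow_right (by norm_num) h) d

theorem rtwr_natCast (i x : ℕ) : rtwr i (x : ℝ) = (twr i x : ℝ) := by
  unfold rtwr twr
  generalize i - 1 = d
  induction d with
  | zero => rfl
  | succ d ih =>
    rw [Function.iterate_succ_apply', Function.iterate_succ_apply', ih]
    push_cast
    exact Real.rpow_natCast _ _

/-- For all integers `k ≥ t ≥ 3` there is a constant `c = c(k)` such
that `r_k(k+1, t; P_n) < twr_{t−2}(c·n^{2k})` for all `n > k`: every red/blue coloring of
the `k`-element subsets of `{1,...,N}` with `N ≥ twr_{t−2}(⌈c·n^{2k}⌉)` contains a blue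
ordered `k`-uniform tight path on `n` vertices or a set of `k+1` vertices spanning at
least `t` red `k`-element subsets. -/
theorem stmt_7 :
    ∀ k : ℕ, ∃ c : ℝ, 0 < c ∧ ∀ t : ℕ, 3 ≤ t → t ≤ k → ∀ n : ℕ, k < n →
      (spreadPathRamsey k (k + 1) t n : ℝ) < rtwr (t - 2) (c * (n : ℝ) ^ (2 * k)) ∧
      ∀ N : ℕ, twr (t - 2) ⌈c * (n : ℝ) ^ (2 * k)⌉₊ ≤ N → ∀ χ : Finset ℕ → Bool,
        HasBlueTightPath k n N χ ∨ HasRedSpread k (k + 1) t N χ := by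
  intro k
  refine ⟨((4 * k * 3 ^ k + 1 : ℕ) : ℝ), by positivity, ?_⟩
  intro t ht htk n hn
  have hcast : ((4 * k * 3 ^ k + 1 : ℕ) : ℝ) * (n : ℝ) ^ (2 * k) =
      (((4 * k * 3 ^ k + 1) * n ^ (2 * k) : ℕ) : ℝ) := by push_cast; ring
  rw [hcast, Nat.ceil_natCast, rtwr_natCast]
  -- Start from uniformity `k - t + 3` with three red edges and step up `t - 3` times.
  obtain ⟨M, hM, hP, hb⟩ := exists_initialOrPath (k - t + 1) n k (by omega) (t - 3) (by omega)
  rw [show k - t + 1 + 2 + (t - 3) = k by omega, show 3 + (t - 3) = t by omega] at hP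
  have hlt : M < twr (t - 2) ((4 * k * 3 ^ k + 1) * n ^ (2 * k)) := by
    have h1 : M < 4 * k * M ^ k := by
      have : M ^ 1 ≤ M ^ k := Nat.pow_le_pow_right hM (by omega)
      nlinarith
    refine (h1.trans_le hb).trans_le ?_
    unfold twr
    rw [show t - 2 - 1 = t - 3 by omega]
    apply iterate_two_pow_mono
    rw [mul_pow, ← pow_mul]
    nlinarith [Nat.zero_le (n ^ (2 * k))]
  have hgood : ∀ N, M ≤ N → ∀ χ : Finset ℕ → Bool,
      HasBlueTightPath k n N χ ∨ HasRedSpread k (k + 1) t N χ := by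
    intro N hN χ
    rcases hP (Finset.Icc 1 N) (by simpa using hN) χ with h | ⟨x, hx⟩
    · exact Or.inr h.hasRedSpread
    · exact Or.inl hx.hasBlueTightPath
  refine ⟨?_, fun N hN χ => hgood N (hlt.le.trans hN) χ⟩
  have hle : spreadPathRamsey k (k + 1) t n ≤ M :=
    Nat.sInf_le fun χ => (hgood M le_rfl χ).symm
  exact_mod_cast hle.trans_lt hlt
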